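/- Let c > 1 be a real constant and k ≥ 1, l ≥ 1 integers with μ = max{k, l}. For any finite simple graph G of order n with minimum degree δ ≥ c·μ − 1, the parametric domination number satisfies the strict inequality γ_{k,l}(G) < (c/(δ+1) + e^{−0.5·μ·(c + 1/c − 2)}) · μ·n. -/

import Mathlib

/-!
Take a random set `A` of vertices, each chosen independently with probability `p = cμ / (δ + 1)`,
and repair it: a closed neighbourhood meeting `A` in `X < μ` vertices donates `μ - X` of its
remaining vertices. The deficit `μ - X` (truncated at `0`) is at most `μ c ^ (μ - X)`, and since
`X` has mean at least `cμ`, the expectation of `c ^ (μ - X)` is at most `c ^ μ e ^ (-μ (c - 1))`.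
The bound `log c < (c - 1 / c) / 2`, which is `t < sinh t` at `t = log c`, turns this into
`e ^ (-μ (c + 1 / c - 2) / 2)`, so some repaired set is as small as claimed.
-/

open Finset Real

/-- The parametric domination number γ_{k,l}: the minimum cardinality of a set D such that
every vertex outside D has at least k members of D in its closed neighbourhood, and every
vertex of D has at least l members of D in its closed neighbourhood. -/
noncomputable def paramDomNum {V : Type*} [Fintype V] [DecidableEq V]
    (G : SimpleGraph V) [DecidableRel G.Adj] (k l : ℕ) : ℕ :=
  sInf {m : ℕ | ∃ D : Finset V,
    (∀ v, v ∉ D → k ≤ ((insert v (G.neighborFinset v)) ∩ D).card) ∧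
    (∀ v, v ∈ D → l ≤ ((insert v (G.neighborFinset v)) ∩ D).card) ∧
    m = D.card}

section ParamDomNum

variable {V : Type*} [Fintype V] [DecidableEq V] {G : SimpleGraph V} [DecidableRel G.Adj]

lemma paramDomNum_le_card {k l : ℕ} {D : Finset V}
    (hD : ∀ v, max k l ≤ #(insert v (G.neighborFinset v) ∩ D)) : paramDomNum G k l ≤ #D :=
  Nat.sInf_le ⟨D, fun v _ ↦ (le_max_left k l).trans (hD v),
    fun v _ ↦ (le_max_right k l).trans (hD v), rfl⟩

lemma minDegree_add_one_le_card_insert_neighborFinset (v : V) :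
    G.minDegree + 1 ≤ #(insert v (G.neighborFinset v)) := by
  rw [card_insert_of_notMem (G.notMem_neighborFinset_self v), G.card_neighborFinset_eq_degree]
  exact Nat.succ_le_succ (G.minDegree_le_degree v)

end ParamDomNum

lemma exists_forall_le_card_inter_and_card_le {ι V : Type*} [Fintype ι] [DecidableEq V]
    {N : ι → Finset V} {m : ι → ℕ} (hN : ∀ i, m i ≤ #(N i)) (A : Finset V) :
    ∃ D : Finset V, (∀ i, m i ≤ #(N i ∩ D)) ∧ #D ≤ #A + ∑ i, (m i - #(N i ∩ A)) := by
  have exists_repair (i : ι) : ∃ B ⊆ N i \ A, #B = m i - #(N i ∩ A) := by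
    refine exists_subset_card_eq ?_
    have := card_sdiff_add_card_inter (N i) A
    have := hN i
    omega
  choose B hBsub hBcard using exists_repair
  refine ⟨A ∪ univ.biUnion B, fun i ↦ ?_, ?_⟩
  · have hdisj : Disjoint (N i ∩ A) (B i) :=
      (disjoint_sdiff_inter (N i) A).symm.mono_right (hBsub i)
    calc m i ≤ #(N i ∩ A) + #(B i) := by have := hBcard i; omega
      _ = #(N i ∩ A ∪ B i) := (card_union_of_disjoint hdisj).symm
      _ ≤ #(N i ∩ (A ∪ univ.biUnion B)) := by
        rw [inter_union_distrib_left]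
        exact card_le_card (union_subset_union_right
          (subset_inter ((hBsub i).trans sdiff_subset) (subset_biUnion_of_mem B (mem_univ i))))
  · calc #(A ∪ univ.biUnion B) ≤ #A + ∑ i, #(B i) :=
        (card_union_le _ _).trans (Nat.add_le_add_left card_biUnion_le _)
      _ = #A + ∑ i, (m i - #(N i ∩ A)) := by simp only [hBcard]

/-- The probability that a random subset of `V`, containing each element independently with
probability `p`, equals `A`. Expectations over this random subset are written as finite sums
weighted by it. -/
def bernoulliWeight {V R : Type*} [Fintype V] [DecidableEq V] [CommRing R] (p : R)
    (A : Finset V) : R :=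
  p ^ #A * (1 - p) ^ #Aᶜ

section BernoulliWeight

variable {V R : Type*} [Fintype V] [DecidableEq V] [CommRing R]

lemma bernoulliWeight_nonneg [PartialOrder R] [IsOrderedRing R] {p : R} (hp₀ : 0 ≤ p)
    (hp₁ : p ≤ 1) (A : Finset V) : 0 ≤ bernoulliWeight p A :=
  mul_nonneg (pow_nonneg hp₀ _) (pow_nonneg (sub_nonneg.2 hp₁) _)

lemma sum_bernoulliWeight_mul_prod (p : R) (f : V → R) :
    ∑ A, bernoulliWeight p A * ∏ v ∈ A, f v = ∏ v, (p * f v + (1 - p)) := by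
  rw [Fintype.prod_add]
  refine sum_congr rfl fun A _ ↦ ?_
  rw [bernoulliWeight, prod_mul_distrib, prod_const, prod_const, mul_right_comm]

lemma sum_bernoulliWeight_mul_pow_card_inter (p x : R) (S : Finset V) :
    ∑ A, bernoulliWeight p A * x ^ #(S ∩ A) = (p * x + (1 - p)) ^ #S := by
  have hpow (A : Finset V) : x ^ #(S ∩ A) = ∏ v ∈ A, if v ∈ S then x else 1 := by
    rw [prod_ite_mem, prod_const, inter_comm]
  have hfactor (v : V) : p * (if v ∈ S then x else 1) + (1 - p) =
      if v ∈ S then p * x + (1 - p) else 1 := by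
    split_ifs <;> ring
  calc ∑ A, bernoulliWeight p A * x ^ #(S ∩ A)
      = ∏ v, (p * (if v ∈ S then x else 1) + (1 - p)) := by
        rw [← sum_bernoulliWeight_mul_prod]
        exact sum_congr rfl fun A _ ↦ by rw [hpow]
    _ = (p * x + (1 - p)) ^ #S := by
        simp only [hfactor, prod_ite_mem, univ_inter, prod_const]

lemma sum_bernoulliWeight (p : R) : ∑ A : Finset V, bernoulliWeight p A = 1 := by
  simpa using sum_bernoulliWeight_mul_pow_card_inter p 1 (∅ : Finset V)

lemma sum_bernoulliWeight_mul_card (p : R) :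
    ∑ A : Finset V, bernoulliWeight p A * (#A : R) = Fintype.card V * p := by
  have hcard (A : Finset V) : (#A : R) = ∑ v, (1 - 0 ^ #({v} ∩ A)) := by
    have hindicator (v : V) : (1 - 0 ^ #({v} ∩ A) : R) = if v ∈ A then 1 else 0 := by
      split_ifs with hv <;> simp [hv]
    simp [hindicator]
  simp only [hcard, mul_sum]
  rw [sum_comm]
  simp [mul_sub, sum_sub_distrib, sum_bernoulliWeight, sum_bernoulliWeight_mul_pow_card_inter]

lemma exists_lt_of_sum_bernoulliWeight_mul_lt [LinearOrder R] [IsStrictOrderedRing R] {p b : R}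
    (hp₀ : 0 ≤ p) (hp₁ : p ≤ 1) {f : Finset V → R}
    (h : ∑ A, bernoulliWeight p A * f A < b) : ∃ A, f A < b := by
  have hlt : ∑ A, bernoulliWeight p A * f A < ∑ A : Finset V, bernoulliWeight p A * b := by
    rwa [← sum_mul, sum_bernoulliWeight, one_mul]
  obtain ⟨A, -, hA⟩ := exists_lt_of_sum_lt hlt
  exact ⟨A, lt_of_mul_lt_mul_left hA (bernoulliWeight_nonneg hp₀ hp₁ A)⟩

end BernoulliWeight

lemma natCast_tsub_le_mul_pow_mul_inv_pow {K : Type*} [Field K] [LinearOrder K]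
    [IsStrictOrderedRing K] {c : K} (hc : 1 ≤ c) (m x : ℕ) :
    ((m - x : ℕ) : K) ≤ m * c ^ m * c⁻¹ ^ x := by
  have hc₀ : 0 < c := one_pos.trans_le hc
  obtain hmx | hxm := le_total m x
  · rw [Nat.sub_eq_zero_of_le hmx, Nat.cast_zero]
    positivity
  · calc ((m - x : ℕ) : K) ≤ m := mod_cast Nat.sub_le m x
      _ ≤ m * c ^ (m - x) := le_mul_of_one_le_right m.cast_nonneg (one_le_pow₀ hc)
      _ = m * c ^ m * c⁻¹ ^ x := by rw [pow_sub₀ c hc₀.ne' hxm, inv_pow, mul_assoc]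

lemma log_lt_half_sub_inv {c : ℝ} (hc : 1 < c) : log c < (c - c⁻¹) / 2 := by
  simpa only [sinh_log (one_pos.trans hc)] using self_lt_sinh_iff.2 (log_pos hc)

lemma one_sub_pow_le_exp_neg_mul {t : ℝ} (ht : t ≤ 1) (n : ℕ) :
    (1 - t) ^ n ≤ exp (-(n * t)) := by
  calc (1 - t) ^ n ≤ exp (-t) ^ n := pow_le_pow_left₀ (sub_nonneg.2 ht) (one_sub_le_exp_neg t) n
    _ = exp (-(n * t)) := by rw [← exp_nat_mul, mul_neg]

lemma pow_mul_pow_lt_exp_of_mul_le {c p : ℝ} (hc : 1 < c) (hp : p ≤ 1) {m M : ℕ} (hm : 0 < m)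
    (hmean : c * m ≤ M * p) :
    c ^ m * (p * c⁻¹ + (1 - p)) ^ M < exp (-(m / 2 * (c + c⁻¹ - 2))) := by
  have hc₀ : 0 < c := one_pos.trans hc
  have hinv : 0 ≤ 1 - c⁻¹ := sub_nonneg.2 (inv_le_one_of_one_le₀ hc.le)
  have hle_one : p * (1 - c⁻¹) ≤ 1 :=
    mul_le_one₀ hp hinv (sub_le_self 1 (inv_nonneg.2 hc₀.le))
  have hexponent : m * (c - 1) ≤ M * (p * (1 - c⁻¹)) := by
    calc m * (c - 1) = c * m * (1 - c⁻¹) := by field_simp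
      _ ≤ M * p * (1 - c⁻¹) := mul_le_mul_of_nonneg_right hmean hinv
      _ = M * (p * (1 - c⁻¹)) := mul_assoc _ _ _
  calc c ^ m * (p * c⁻¹ + (1 - p)) ^ M
      = exp (m * log c) * (1 - p * (1 - c⁻¹)) ^ M := by
        rw [exp_nat_mul, exp_log hc₀]; ring
    _ ≤ exp (m * log c) * exp (-(M * (p * (1 - c⁻¹)))) := by
        gcongr
        exact one_sub_pow_le_exp_neg_mul hle_one M
    _ ≤ exp (m * log c) * exp (-(m * (c - 1))) := by gcongr
    _ = exp (m * log c - m * (c - 1)) := by rw [← exp_add, ← sub_eq_add_neg]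
    _ < exp (m * ((c - c⁻¹) / 2) - m * (c - 1)) := by
        gcongr
        exact log_lt_half_sub_inv hc
    _ = exp (-(m / 2 * (c + c⁻¹ - 2))) := by ring_nf

section Multicover

variable {ι V : Type*} [Fintype ι] [Nonempty ι] [Fintype V] [DecidableEq V] {N : ι → Finset V}
  {c : ℝ} {m : ℕ}

lemma sum_bernoulliWeight_mul_card_add_sum_tsub_lt {p : ℝ} (hc : 1 < c) (hm : 0 < m)
    (hp₀ : 0 ≤ p) (hp₁ : p ≤ 1) (hN : ∀ i, c * m ≤ #(N i) * p) :
    ∑ A, bernoulliWeight p A * ((#A + ∑ i, (m - #(N i ∩ A)) : ℕ) : ℝ) <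
      Fintype.card V * p + Fintype.card ι * (m * exp (-(m / 2 * (c + c⁻¹ - 2)))) := by
  have hm₀ : (0 : ℝ) < m := mod_cast hm
  have hdeficit (i : ι) : ∑ A, bernoulliWeight p A * ((m - #(N i ∩ A) : ℕ) : ℝ) <
      m * exp (-(m / 2 * (c + c⁻¹ - 2))) := by
    calc ∑ A, bernoulliWeight p A * ((m - #(N i ∩ A) : ℕ) : ℝ)
        ≤ ∑ A, bernoulliWeight p A * (m * c ^ m * c⁻¹ ^ #(N i ∩ A)) := by
          gcongr with A
          · exact bernoulliWeight_nonneg hp₀ hp₁ A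
          · exact natCast_tsub_le_mul_pow_mul_inv_pow hc.le m _
      _ = m * (c ^ m * (p * c⁻¹ + (1 - p)) ^ #(N i)) := by
          rw [← sum_bernoulliWeight_mul_pow_card_inter, ← mul_assoc, mul_sum]
          exact sum_congr rfl fun A _ ↦ mul_left_comm _ _ _
      _ < m * exp (-(m / 2 * (c + c⁻¹ - 2))) :=
          mul_lt_mul_of_pos_left (pow_mul_pow_lt_exp_of_mul_le hc hp₁ hm (hN i)) hm₀
  calc ∑ A, bernoulliWeight p A * ((#A + ∑ i, (m - #(N i ∩ A)) : ℕ) : ℝ)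
      = Fintype.card V * p + ∑ i, ∑ A, bernoulliWeight p A * ((m - #(N i ∩ A) : ℕ) : ℝ) := by
        simp only [Nat.cast_add, Nat.cast_sum, mul_add, sum_add_distrib, mul_sum,
          sum_bernoulliWeight_mul_card]
        rw [sum_comm]
    _ < Fintype.card V * p + ∑ _i : ι, m * exp (-(m / 2 * (c + c⁻¹ - 2))) := by
        gcongr with i
        · exact univ_nonempty
        · exact hdeficit i
    _ = Fintype.card V * p + Fintype.card ι * (m * exp (-(m / 2 * (c + c⁻¹ - 2)))) := by
        rw [sum_const, card_univ, nsmul_eq_mul]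

theorem exists_forall_le_card_inter_and_card_lt {d : ℝ} (hc : 1 < c) (hm : 0 < m)
    (hd : c * m ≤ d) (hN : ∀ i, d ≤ #(N i)) :
    ∃ D : Finset V, (∀ i, m ≤ #(N i ∩ D)) ∧
      (#D : ℝ) < Fintype.card V * (c * m / d) +
        Fintype.card ι * (m * exp (-(m / 2 * (c + c⁻¹ - 2)))) := by
  have hm₀ : (0 : ℝ) < m := mod_cast hm
  have hd₀ : 0 < d := (by positivity : 0 < c * m).trans_le hd
  have hp₀ : 0 ≤ c * m / d := by positivity
  have hp₁ : c * m / d ≤ 1 := (div_le_one hd₀).2 hd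
  have hmean (i : ι) : c * m ≤ #(N i) * (c * m / d) := by
    calc c * m = d * (c * m / d) := (mul_div_cancel₀ _ hd₀.ne').symm
      _ ≤ #(N i) * (c * m / d) := mul_le_mul_of_nonneg_right (hN i) hp₀
  have hmN (i : ι) : m ≤ #(N i) := by
    exact_mod_cast (le_mul_of_one_le_left hm₀.le hc.le).trans (hd.trans (hN i))
  obtain ⟨A, hA⟩ := exists_lt_of_sum_bernoulliWeight_mul_lt hp₀ hp₁
    (sum_bernoulliWeight_mul_card_add_sum_tsub_lt hc hm hp₀ hp₁ hmean)
  obtain ⟨D, hD, hDcard⟩ := exists_forall_le_card_inter_and_card_le hmN A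
  exact ⟨D, hD, (Nat.cast_le.2 hDcard).trans_lt hA⟩

end Multicover

theorem param_domination_threshold_bound
    {V : Type*} [Fintype V] [DecidableEq V]
    (G : SimpleGraph V) [DecidableRel G.Adj]
    (n : ℕ) (hn : n = Fintype.card V)
    (δ : ℕ) (hδ : δ = G.minDegree)
    (c : ℝ) (hc : 1 < c)
    (k l : ℕ) (hk : 1 ≤ k) (hl : 1 ≤ l)
    (μ : ℕ) (hμ : μ = max k l)
    (hcδ : c * μ - 1 ≤ (δ : ℝ)) :
    (paramDomNum G k l : ℝ) <
      (c / ((δ : ℝ) + 1) + Real.exp (-(0.5 * μ * (c + 1 / c - 2)))) * ((μ : ℝ) * n) := by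
  subst hn hδ hμ
  have hμ : 0 < max k l := by omega
  have hdeg : c * (max k l : ℕ) ≤ (G.minDegree : ℝ) + 1 := sub_le_iff_le_add.1 hcδ
  have : Nonempty V := by
    by_contra hV
    rw [not_nonempty_iff] at hV
    have hμ₁ : (1 : ℝ) ≤ (max k l : ℕ) := mod_cast hμ
    rw [G.minDegree_of_subsingleton, Nat.cast_zero] at hdeg
    nlinarith
  obtain ⟨D, hD, hDcard⟩ := exists_forall_le_card_inter_and_card_lt hc hμ hdeg
    fun v : V ↦ mod_cast minDegree_add_one_le_card_insert_neighborFinset (G := G) v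
  calc (paramDomNum G k l : ℝ) ≤ #D := mod_cast paramDomNum_le_card hD
    _ < _ := hDcard
    _ = _ := by ring_nf
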